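/- Let G = {(A, B) ∈ GL₂(ℤ/3ℤ) × GL₂(ℤ/3ℤ) : det A = det B}. Then G has exactly 1152 elements, and exactly 927 pairs (A, B) ∈ G are such that A satisfies condition (H) or B satisfies condition (H); in particular, the proportion of such pairs in G is 103/128. -/

import Mathlib

/-- Condition (H) on a matrix `A ∈ GL₂(ℤ/3ℤ)`: letting `f(A)` be the multiplicative order of
`det A`, the eigenvalues `α, β` of `A` satisfy `α ^ f(A) + β ^ f(A) ≠ 2`; equivalently (since
`det(A) ^ f(A) = 1`), the matrix `A ^ f(A) - 1` is invertible. -/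
def CondH (A : Matrix (Fin 2) (Fin 2) (ZMod 3)) : Prop :=
  IsUnit (A ^ orderOf A.det - 1)

/-- The set `G = {(A, B) ∈ GL₂(ℤ/3ℤ)² : det A = det B}`. -/
def Gpairs : Set (GL (Fin 2) (ZMod 3) × GL (Fin 2) (ZMod 3)) :=
  {p | (p.1 : Matrix (Fin 2) (Fin 2) (ZMod 3)).det =
    (p.2 : Matrix (Fin 2) (Fin 2) (ZMod 3)).det}

/-- Among the matrices in `GL₂(ℤ/3ℤ)`, condition (H) says that `1` is not an eigenvalue. -/
theorem condH_iff_trace_ne (A : Matrix (Fin 2) (Fin 2) (ZMod 3)) (hA : A.det ≠ 0) :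
    CondH A ↔ A.trace ≠ 1 + A.det := by
  have h_det : A.det = 1 ∨ A.det = -1 := by
    generalize A.det = d at hA
    revert d
    decide
  have h_ord : orderOf (-1 : ZMod 3) = 2 := orderOf_eq_prime (by decide) (by decide)
  unfold CondH
  rw [Matrix.isUnit_iff_isUnit_det, isUnit_iff_ne_zero]
  rcases h_det with h | h
  · simp only [h, orderOf_one, pow_one]
    simp only [Matrix.det_fin_two, Matrix.trace_fin_two, Matrix.sub_apply, Matrix.one_apply_eq,
      Matrix.one_apply_ne zero_ne_one, Matrix.one_apply_ne one_ne_zero] at h ⊢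
    generalize A 0 0 = a, A 0 1 = b, A 1 0 = c, A 1 1 = d at h ⊢
    revert a b c d
    decide +kernel
  · simp only [h, h_ord, sq]
    simp only [Matrix.det_fin_two, Matrix.trace_fin_two, Matrix.sub_apply, Matrix.one_apply_eq,
      Matrix.one_apply_ne zero_ne_one, Matrix.one_apply_ne one_ne_zero, Matrix.mul_apply,
      Fin.sum_univ_two] at h ⊢
    generalize A 0 0 = a, A 0 1 = b, A 1 0 = c, A 1 1 = d at h ⊢
    revert a b c d
    decide +kernel

/-- Pairs of elements satisfying `P` in a common fibre of `f`, counted fibre by fibre. -/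
theorem Nat.card_pairs_eq_sum_sq {α D : Type*} [Finite α] [Fintype D] (f : α → D)
    (P : α → Prop) :
    Nat.card {p : α × α // f p.1 = f p.2 ∧ P p.1 ∧ P p.2} =
      ∑ d, Nat.card {a : α // f a = d ∧ P a} ^ 2 := by
  let e : {p : α × α // f p.1 = f p.2 ∧ P p.1 ∧ P p.2} ≃
      Σ d, {a : α // f a = d ∧ P a} × {a : α // f a = d ∧ P a} :=
    { toFun := fun p => ⟨f p.1.2, ⟨p.1.1, p.2.1, p.2.2.1⟩, ⟨p.1.2, rfl, p.2.2.2⟩⟩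
      invFun := fun x => ⟨(x.2.1.1, x.2.2.1), x.2.1.2.1.trans x.2.2.2.1.symm,
        x.2.1.2.2, x.2.2.2.2⟩
      left_inv := fun _ => rfl
      right_inv := by
        rintro ⟨d, ⟨a, ha, hPa⟩, ⟨b, rfl, hPb⟩⟩
        rfl }
  rw [Nat.card_congr e, Nat.card_sigma]
  simp only [Nat.card_prod, sq]

/-- The elements of a general linear group with a given nonzero determinant, as matrices. -/
def glFibreEquiv {n K : Type*} [Fintype n] [DecidableEq n] [Field K] (d : K) (hd : d ≠ 0)
    (Q : Matrix n n K → Prop) :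
    {A : GL n K // (A : Matrix n n K).det = d ∧ Q A} ≃ {A : Matrix n n K // A.det = d ∧ Q A} where
  toFun A := ⟨A.1, A.2⟩
  invFun A := ⟨Matrix.GeneralLinearGroup.mkOfDetNeZero A.1 (A.2.1.trans_ne hd), A.2⟩
  left_inv _ := Subtype.ext (Units.ext rfl)
  right_inv _ := rfl

/-- A `2 × 2` matrix is given by its four entries. -/
def matrixFinTwoEquiv (R : Type*) : Matrix (Fin 2) (Fin 2) R ≃ R × R × R × R where
  toFun A := (A 0 0, A 0 1, A 1 0, A 1 1)
  invFun v := !![v.1, v.2.1; v.2.2.1, v.2.2.2]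
  left_inv A := (Matrix.eta_fin_two A).symm
  right_inv _ := rfl

theorem card_GL_fibre_eq (d : ZMod 3) (hd : d ≠ 0) (Q : ZMod 3 → ZMod 3 → Prop)
    [∀ s t, Decidable (Q s t)] :
    Nat.card {A : GL (Fin 2) (ZMod 3) // (A : Matrix (Fin 2) (Fin 2) (ZMod 3)).det = d ∧
      Q (A : Matrix (Fin 2) (Fin 2) (ZMod 3)).trace (A : Matrix (Fin 2) (Fin 2) (ZMod 3)).det} =
    Fintype.card {v : ZMod 3 × ZMod 3 × ZMod 3 × ZMod 3 //
      v.1 * v.2.2.2 - v.2.1 * v.2.2.1 = d ∧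
        Q (v.1 + v.2.2.2) (v.1 * v.2.2.2 - v.2.1 * v.2.2.1)} := by
  rw [Nat.card_congr (glFibreEquiv d hd fun A => Q A.trace A.det), ← Nat.card_eq_fintype_card]
  refine Nat.card_congr ((matrixFinTwoEquiv (ZMod 3)).subtypeEquiv fun A => ?_)
  rw [Matrix.det_fin_two, Matrix.trace_fin_two]
  rfl

theorem card_GL_pairs_eq (Q : ZMod 3 → ZMod 3 → Prop) [∀ s t, Decidable (Q s t)] :
    Nat.card {p : GL (Fin 2) (ZMod 3) × GL (Fin 2) (ZMod 3) //
      (p.1 : Matrix (Fin 2) (Fin 2) (ZMod 3)).det = (p.2 : Matrix (Fin 2) (Fin 2) (ZMod 3)).det ∧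
      Q (p.1 : Matrix (Fin 2) (Fin 2) (ZMod 3)).trace
        (p.1 : Matrix (Fin 2) (Fin 2) (ZMod 3)).det ∧
      Q (p.2 : Matrix (Fin 2) (Fin 2) (ZMod 3)).trace
        (p.2 : Matrix (Fin 2) (Fin 2) (ZMod 3)).det} =
    ∑ d ∈ ({1, 2} : Finset (ZMod 3)), Fintype.card {v : ZMod 3 × ZMod 3 × ZMod 3 × ZMod 3 //
      v.1 * v.2.2.2 - v.2.1 * v.2.2.1 = d ∧
        Q (v.1 + v.2.2.2) (v.1 * v.2.2.2 - v.2.1 * v.2.2.1)} ^ 2 := by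
  rw [Nat.card_pairs_eq_sum_sq
    (fun A : GL (Fin 2) (ZMod 3) => (A : Matrix (Fin 2) (Fin 2) (ZMod 3)).det)
    (fun A => Q (A : Matrix (Fin 2) (Fin 2) (ZMod 3)).trace
      (A : Matrix (Fin 2) (Fin 2) (ZMod 3)).det)]
  rw [← Finset.sum_subset (Finset.subset_univ {1, 2})]
  · refine Finset.sum_congr rfl fun d hd => ?_
    rw [card_GL_fibre_eq d (by rintro rfl; revert hd; decide) Q]
  · intro d _ hd
    have h_zero : d = 0 := by revert d; decide
    subst h_zero
    have : IsEmpty {A : GL (Fin 2) (ZMod 3) //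
        (A : Matrix (Fin 2) (Fin 2) (ZMod 3)).det = 0 ∧
        Q (A : Matrix (Fin 2) (Fin 2) (ZMod 3)).trace
          (A : Matrix (Fin 2) (Fin 2) (ZMod 3)).det} :=
      ⟨fun A => A.1.det_ne_zero A.2.1⟩
    rw [Nat.card_of_isEmpty, zero_pow two_ne_zero]

theorem card_Gpairs : Nat.card Gpairs = 1152 := by
  have h := card_GL_pairs_eq fun _ _ => True
  simp only [and_true] at h
  refine h.trans ?_
  decide +kernel

theorem card_Gpairs_not_condH :
    Nat.card {p : GL (Fin 2) (ZMod 3) × GL (Fin 2) (ZMod 3) //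
      p ∈ Gpairs ∧ ¬(CondH (p.1 : Matrix (Fin 2) (Fin 2) (ZMod 3)) ∨
        CondH (p.2 : Matrix (Fin 2) (Fin 2) (ZMod 3)))} = 225 := by
  simp only [condH_iff_trace_ne _ (Matrix.GeneralLinearGroup.det_ne_zero _), not_or, not_not]
  refine (card_GL_pairs_eq fun s t => s = 1 + t).trans ?_
  decide +kernel

theorem card_Gpairs_condH :
    Nat.card {p : GL (Fin 2) (ZMod 3) × GL (Fin 2) (ZMod 3) //
      p ∈ Gpairs ∧ (CondH (p.1 : Matrix (Fin 2) (Fin 2) (ZMod 3)) ∨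
        CondH (p.2 : Matrix (Fin 2) (Fin 2) (ZMod 3)))} = 927 := by
  have h := Set.ncard_inter_add_ncard_sdiff_eq_ncard Gpairs
    {p | CondH (p.1 : Matrix (Fin 2) (Fin 2) (ZMod 3)) ∨
      CondH (p.2 : Matrix (Fin 2) (Fin 2) (ZMod 3))} Gpairs.toFinite
  have h_total : Gpairs.ncard = 1152 := card_Gpairs
  have h_not := card_Gpairs_not_condH
  change Set.ncard (Gpairs \ {p | CondH (p.1 : Matrix (Fin 2) (Fin 2) (ZMod 3)) ∨
      CondH (p.2 : Matrix (Fin 2) (Fin 2) (ZMod 3))}) = 225 at h_not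
  change Set.ncard (Gpairs ∩ {p | CondH (p.1 : Matrix (Fin 2) (Fin 2) (ZMod 3)) ∨
      CondH (p.2 : Matrix (Fin 2) (Fin 2) (ZMod 3))}) = 927
  lia

/-- The group `G = {(A, B) ∈ GL₂(ℤ/3ℤ)² : det A = det B}` has exactly `1152` elements, and
exactly `927` pairs `(A, B) ∈ G` are such that `A` or `B` satisfies condition (H); in
particular the proportion of such pairs in `G` is `103/128`. -/
theorem card_pairs_GL2_ZMod3_condH :
    Nat.card Gpairs = 1152 ∧
    Nat.card {p : GL (Fin 2) (ZMod 3) × GL (Fin 2) (ZMod 3) //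
      p ∈ Gpairs ∧
      (CondH (p.1 : Matrix (Fin 2) (Fin 2) (ZMod 3)) ∨
        CondH (p.2 : Matrix (Fin 2) (Fin 2) (ZMod 3)))} = 927 ∧
    (Nat.card {p : GL (Fin 2) (ZMod 3) × GL (Fin 2) (ZMod 3) //
      p ∈ Gpairs ∧
      (CondH (p.1 : Matrix (Fin 2) (Fin 2) (ZMod 3)) ∨
        CondH (p.2 : Matrix (Fin 2) (Fin 2) (ZMod 3)))} : ℚ) /
      (Nat.card Gpairs : ℚ) = 103 / 128 := by
  rw [card_Gpairs_condH, card_Gpairs]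
  norm_num
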